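/- arXiv:1003.1544 — 3 statements merged into one kernel-verified Lean document; each statement's English description precedes it below -/
import Mathlib

section
/- Let R be a ring and a an invertible (n+1)×(n+1) matrix over R indexed by Fin (n+1), with two-sided inverse a⁻¹. Fix indices i, j : Fin (n+1), and let m be the n×n matrix obtained from a by deleting row i and column j, i.e. m k l = a (i.succAbove k) (j.succAbove l); assume m is invertible with two-sided inverse N. Then the entry of a⁻¹ in row j, column i is a unit of R, and its inverse (the (i,j)-quasideterminant of a) equals a i j − Σ_{k,l ∈ Fin n} a i (j.succAbove k) * N k l * a (i.succAbove l) j. -/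
/-!
Move row `i` and column `j` to the end and write `a` and its inverse in blocks, `[[A, B], [C, D]]`
and `[[A', B'], [C', D']]`, so that `A` is the minor, with inverse `N`, and `D = a i j`. The second
block column of `a * a⁻¹ = 1` reads `A B' + B D' = 0` and `C B' + D D' = 1`; the first equation
gives `B' = -N B D'`, and then the second one is `(D - C N B) D' = 1`. The second block row of
`a⁻¹ * a = 1` gives `D' (D - C N B) = 1` in the same way.
-/

section SchurComplement

open Matrix

variable {R ι κ μ ν : Type*} [Fintype ι] [Fintype κ]

/-- The Schur complement `D - C N B` of the upper left block of `M = [[A, B], [C, D]]`, a matrix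
analogue of the quasideterminant. `N` stands for the inverse of `A`; it is an argument because
`A⁻¹` is only available for square matrices over a commutative ring. -/
def schurComplement [NonUnitalNonAssocRing R] (M : Matrix (ι ⊕ μ) (κ ⊕ ν) R) (N : Matrix κ ι R) :
    Matrix μ ν R :=
  M.toBlocks₂₂ - M.toBlocks₂₁ * N * M.toBlocks₁₂

theorem schurComplement_apply [NonUnitalNonAssocRing R] (M : Matrix (ι ⊕ μ) (κ ⊕ ν) R)
    (N : Matrix κ ι R) (i : μ) (j : ν) :
    schurComplement M N i j = M (.inr i) (.inr j) -
      ∑ k, ∑ l, M (.inr i) (.inl k) * N k l * M (.inl l) (.inr j) := by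
  simp only [schurComplement, Matrix.sub_apply, mul_apply, Finset.sum_mul]
  rw [Finset.sum_comm]
  rfl

variable [Ring R]

theorem schurComplement_mul_toBlocks₂₂_eq_one [Fintype ν] [DecidableEq ι] [DecidableEq κ]
    [DecidableEq μ] {M : Matrix (ι ⊕ μ) (κ ⊕ ν) R} {M' : Matrix (κ ⊕ ν) (ι ⊕ μ) R}
    {N : Matrix κ ι R} (hM : M * M' = 1) (hN : N * M.toBlocks₁₁ = 1) :
    schurComplement M N * M'.toBlocks₂₂ = 1 := by
  rw [← fromBlocks_toBlocks M, ← fromBlocks_toBlocks M', fromBlocks_multiply, ← fromBlocks_one,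
    fromBlocks_inj] at hM
  obtain ⟨-, h₁₂, -, h₂₂⟩ := hM
  have toBlocks₁₂_eq : M'.toBlocks₁₂ = -(N * (M.toBlocks₁₂ * M'.toBlocks₂₂)) := by
    rw [← Matrix.mul_neg, ← eq_neg_of_add_eq_zero_left h₁₂, ← Matrix.mul_assoc, hN, Matrix.one_mul]
  rw [schurComplement, ← h₂₂, toBlocks₁₂_eq, Matrix.sub_mul, Matrix.mul_neg, neg_add_eq_sub]
  simp only [Matrix.mul_assoc]

theorem toBlocks₂₂_mul_schurComplement_eq_one [Fintype μ] [DecidableEq ι] [DecidableEq κ]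
    [DecidableEq ν] {M : Matrix (ι ⊕ μ) (κ ⊕ ν) R} {M' : Matrix (κ ⊕ ν) (ι ⊕ μ) R}
    {N : Matrix κ ι R} (hM : M' * M = 1) (hN : M.toBlocks₁₁ * N = 1) :
    M'.toBlocks₂₂ * schurComplement M N = 1 := by
  rw [← fromBlocks_toBlocks M, ← fromBlocks_toBlocks M', fromBlocks_multiply, ← fromBlocks_one,
    fromBlocks_inj] at hM
  obtain ⟨-, -, h₂₁, h₂₂⟩ := hM
  have toBlocks₂₁_eq : M'.toBlocks₂₁ = -(M'.toBlocks₂₂ * M.toBlocks₂₁ * N) := by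
    rw [← Matrix.neg_mul, ← eq_neg_of_add_eq_zero_left h₂₁, Matrix.mul_assoc, hN, Matrix.mul_one]
  rw [schurComplement, ← h₂₂, toBlocks₂₁_eq, Matrix.mul_sub, Matrix.neg_mul, neg_add_eq_sub]
  simp only [Matrix.mul_assoc]

-- The equivalences list the rows and columns of `a`; `none` marks the row and column deleted.
theorem stmt1_general [Fintype μ] [Fintype ν] [DecidableEq ι] [DecidableEq κ] [DecidableEq μ]
    [DecidableEq ν] (a : Matrix μ ν R) (a' : Matrix ν μ R) (ha₁ : a * a' = 1) (ha₂ : a' * a = 1)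
    (e : Option ι ≃ μ) (f : Option κ ≃ ν) (N : Matrix κ ι R)
    (hm₁ : (of fun k l => a (e (some k)) (f (some l))) * N = 1)
    (hm₂ : N * (of fun k l => a (e (some k)) (f (some l))) = 1) :
    IsUnit (a' (f none) (e none)) ∧
    a' (f none) (e none) * (a (e none) (f none) - ∑ k, ∑ l,
      a (e none) (f (some k)) * N k l * a (e (some l)) (f none)) = 1 ∧
    (a (e none) (f none) - ∑ k, ∑ l,
      a (e none) (f (some k)) * N k l * a (e (some l)) (f none)) * a' (f none) (e none) = 1 := by
  let r : ι ⊕ Unit ≃ μ := (Equiv.optionEquivSumPUnit ι).symm.trans e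
  let c : κ ⊕ Unit ≃ ν := (Equiv.optionEquivSumPUnit κ).symm.trans f
  let M := a.submatrix r c
  let M' := a'.submatrix c r
  have hM₁ : M * M' = 1 := by rw [submatrix_mul_equiv, ha₁, submatrix_one_equiv]
  have hM₂ : M' * M = 1 := by rw [submatrix_mul_equiv, ha₂, submatrix_one_equiv]
  have left := congrFun₂ (toBlocks₂₂_mul_schurComplement_eq_one hM₂ hm₁) () ()
  have right := congrFun₂ (schurComplement_mul_toBlocks₂₂_eq_one hM₁ hm₂) () ()
  rw [mul_apply, Fintype.sum_unique, one_apply_eq, schurComplement_apply] at left right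
  exact ⟨⟨⟨_, _, left, right⟩, rfl⟩, left, right⟩

end SchurComplement

/-- Quasideterminant: if `a` is an invertible `(n+1)×(n+1)` matrix over a ring `R` with
two-sided inverse `a'`, and the minor of `a` obtained by deleting row `i` and column `j`
has a two-sided inverse `N`, then the entry `a' j i` of the inverse matrix is a unit of `R`
whose inverse (the `(i,j)`-quasideterminant of `a`) equals
`a i j - ∑ k l, a i (j.succAbove k) * N k l * a (i.succAbove l) j`. -/
theorem stmt1 {R : Type*} [Ring R] {n : ℕ}
    (a a' : Matrix (Fin (n + 1)) (Fin (n + 1)) R)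
    (ha₁ : a * a' = 1) (ha₂ : a' * a = 1)
    (i j : Fin (n + 1)) (N : Matrix (Fin n) (Fin n) R)
    (hm₁ : (Matrix.of fun k l => a (i.succAbove k) (j.succAbove l)) * N = 1)
    (hm₂ : N * (Matrix.of fun k l => a (i.succAbove k) (j.succAbove l)) = 1) :
    IsUnit (a' j i) ∧
    a' j i * (a i j - ∑ k : Fin n, ∑ l : Fin n,
        a i (j.succAbove k) * N k l * a (i.succAbove l) j) = 1 ∧
    (a i j - ∑ k : Fin n, ∑ l : Fin n,
        a i (j.succAbove k) * N k l * a (i.succAbove l) j) * a' j i = 1 := by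
  simpa only [finSuccEquiv'_symm_none, finSuccEquiv'_symm_some] using
    stmt1_general a a' ha₁ ha₂ (finSuccEquiv' i).symm (finSuccEquiv' j).symm N
      (by simpa using hm₁) (by simpa using hm₂)
end

section
/- Let ℍ be the quaternion algebra over ℝ with basis (e₀, e₁, e₂, e₃) = (1, i, j, k), let c : Fin 4 → Fin 4 → ℝ, and define f : ℍ → ℍ by f x = Σ_{k,r ∈ Fin 4} c k r • (e k * x * e r). Write f_l^m for the m-th real coordinate of f (e l) (so f_l^0 = (f (e l)).re, f_l^1 = (f (e l)).imI, f_l^2 = (f (e l)).imJ, f_l^3 = (f (e l)).imK). Then the sixteen coefficients are recovered from the coordinates of f by: 4c₀₀ = f₀⁰+f₁¹+f₂²+f₃³; 4c₁₁ = −f₀⁰−f₁¹+f₂²+f₃³; 4c₂₂ = −f₀⁰+f₁¹−f₂²+f₃³; 4c₃₃ = −f₀⁰+f₁¹+f₂²−f₃³; 4c₁₀ = −f₁⁰+f₀¹−f₃²+f₂³; 4c₀₁ = −f₁⁰+f₀¹+f₃²−f₂³; 4c₃₂ = −f₁⁰−f₀¹−f₃²−f₂³; 4c₂₃ = f₁⁰+f₀¹−f₃²−f₂³;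 4c₂₀ = −f₂⁰+f₃¹+f₀²−f₁³; 4c₃₁ = f₂⁰−f₃¹+f₀²−f₁³; 4c₀₂ = −f₂⁰−f₃¹+f₀²+f₁³; 4c₁₃ = −f₂⁰−f₃¹−f₀²−f₁³; 4c₃₀ = −f₃⁰−f₂¹+f₁²+f₀³; 4c₂₁ = −f₃⁰−f₂¹−f₁²−f₀³; 4c₁₂ = f₃⁰−f₂¹−f₁²+f₀³; 4c₀₃ = −f₃⁰+f₂¹−f₁²+f₀³. -/
/-- The standard real basis `(1, i, j, k)` of the quaternion algebra. -/
noncomputable def eQ : Fin 4 → Quaternion ℝ :=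
  ![1, ⟨0, 1, 0, 0⟩, ⟨0, 0, 1, 0⟩, ⟨0, 0, 0, 1⟩]

/-!
For quaternions `a` and `b`, the map `x ↦ a * x * b` has trace `4 * (a.re * b.re)`. Since the basis
`e = (1, i, j, k)` satisfies `re (star (e k) * e p) = δ_{kp}`, the sixteen maps `x ↦ e k * x * e r`
are orthogonal for the trace form, and composing `f` with `x ↦ star (e k) * x * star (e r)` isolates
`c k r`: the composite has trace `4 * c k r`. Written out in coordinates, these traces are the
right-hand sides of the sixteen formulas.
-/

open LinearMap (mulLeftRight trace)
open scoped Quaternion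

theorem mulLeftRight_mul_mulLeftRight {R A : Type*} [CommSemiring R] [NonUnitalSemiring A]
    [Module R A] [SMulCommClass R A A] [IsScalarTower R A A] (a b x y : A) :
    mulLeftRight R (a, b) * mulLeftRight R (x, y) = mulLeftRight R (a * x, y * b) := by
  ext z
  simp [mul_assoc]

section

variable {R : Type*} [CommRing R]

/-- The basis `(1, i, j, k)` of the quaternions over a commutative ring. It is Mathlib's basis of a
quaternion algebra, retyped so that it takes values in `ℍ[R]` rather than in `ℍ[R,-1,0,-1]`. -/
noncomputable def quaternionBasis (R : Type*) [CommRing R] : Module.Basis (Fin 4) R ℍ[R] :=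
  QuaternionAlgebra.basisOneIJK (-1) 0 (-1)

theorem quaternionBasis_repr (q : ℍ[R]) :
    ⇑((quaternionBasis R).repr q) = ![q.re, q.imI, q.imJ, q.imK] :=
  rfl

theorem equivTuple_quaternionBasis (l : Fin 4) :
    Quaternion.equivTuple R (quaternionBasis R l) = Pi.single l 1 := by
  rw [Quaternion.equivTuple_apply, ← quaternionBasis_repr, Module.Basis.repr_self,
    Finsupp.single_eq_pi_single]

@[simp]
theorem re_quaternionBasis (l : Fin 4) : (quaternionBasis R l).re = if 0 = l then 1 else 0 :=
  (congrFun (equivTuple_quaternionBasis l) 0).trans (Pi.single_apply ..)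

@[simp]
theorem imI_quaternionBasis (l : Fin 4) : (quaternionBasis R l).imI = if 1 = l then 1 else 0 :=
  (congrFun (equivTuple_quaternionBasis l) 1).trans (Pi.single_apply ..)

@[simp]
theorem imJ_quaternionBasis (l : Fin 4) : (quaternionBasis R l).imJ = if 2 = l then 1 else 0 :=
  (congrFun (equivTuple_quaternionBasis l) 2).trans (Pi.single_apply ..)

@[simp]
theorem imK_quaternionBasis (l : Fin 4) : (quaternionBasis R l).imK = if 3 = l then 1 else 0 :=
  (congrFun (equivTuple_quaternionBasis l) 3).trans (Pi.single_apply ..)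

theorem re_star_quaternionBasis_mul (k p : Fin 4) :
    (star (quaternionBasis R k) * quaternionBasis R p).re = if k = p then 1 else 0 := by
  fin_cases k <;> fin_cases p <;> simp

theorem re_quaternionBasis_mul_star (q r : Fin 4) :
    (quaternionBasis R q * star (quaternionBasis R r)).re = if r = q then 1 else 0 := by
  fin_cases q <;> fin_cases r <;> simp

theorem trace_quaternion_eq_sum_coordinates (f : Module.End R ℍ[R]) :
    trace R ℍ[R] f = (f (quaternionBasis R 0)).re + (f (quaternionBasis R 1)).imI +
      (f (quaternionBasis R 2)).imJ + (f (quaternionBasis R 3)).imK := by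
  simp [LinearMap.trace_eq_matrix_trace R (quaternionBasis R), Matrix.trace, Fin.sum_univ_four,
    LinearMap.toMatrix_apply, quaternionBasis_repr]

theorem trace_mulLeftRight_quaternion (a b : ℍ[R]) :
    trace R ℍ[R] (mulLeftRight R (a, b)) = 4 * (a.re * b.re) := by
  simp only [trace_quaternion_eq_sum_coordinates, LinearMap.mulLeftRight_apply, Quaternion.re_mul,
    Quaternion.imI_mul, Quaternion.imJ_mul, Quaternion.imK_mul, re_quaternionBasis,
    imI_quaternionBasis, imJ_quaternionBasis, imK_quaternionBasis, Fin.reduceEq, one_ne_zero,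
    zero_ne_one, reduceIte]
  ring

/-- The linear map `x ↦ ∑ k r, c k r • (e k * x * e r)` with standard components `c`, where `e` is
the basis `(1, i, j, k)`. -/
noncomputable def ofComponents (c : Fin 4 → Fin 4 → R) : Module.End R ℍ[R] :=
  ∑ k, ∑ r, c k r • mulLeftRight R (quaternionBasis R k, quaternionBasis R r)

theorem ofComponents_apply (c : Fin 4 → Fin 4 → R) (x : ℍ[R]) :
    ofComponents c x = ∑ k, ∑ r, c k r • (quaternionBasis R k * x * quaternionBasis R r) := by
  simp [ofComponents]

theorem trace_mulLeftRight_star_mul_ofComponents (c : Fin 4 → Fin 4 → R) (k r : Fin 4) :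
    trace R ℍ[R] (mulLeftRight R (star (quaternionBasis R k), star (quaternionBasis R r)) *
      ofComponents c) = 4 * c k r := by
  simp only [ofComponents, Finset.mul_sum, mul_smul_comm, mulLeftRight_mul_mulLeftRight, map_sum,
    map_smul, trace_mulLeftRight_quaternion, re_star_quaternionBasis_mul,
    re_quaternionBasis_mul_star]
  simp [mul_comm]

theorem four_mul_component (c : Fin 4 → Fin 4 → R) (k r : Fin 4) :
    let g l := star (quaternionBasis R k) * ofComponents c (quaternionBasis R l) *
      star (quaternionBasis R r)
    4 * c k r = (g 0).re + (g 1).imI + (g 2).imJ + (g 3).imK :=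
  (trace_mulLeftRight_star_mul_ofComponents c k r).symm.trans
    (trace_quaternion_eq_sum_coordinates _)

theorem stmt16_general (c : Fin 4 → Fin 4 → R) :
    let g : Fin 4 → ℍ[R] := fun l => ∑ k : Fin 4, ∑ r : Fin 4,
      c k r • (quaternionBasis R k * quaternionBasis R l * quaternionBasis R r)
    4 * c 0 0 = (g 0).re + (g 1).imI + (g 2).imJ + (g 3).imK ∧
    4 * c 1 1 = -(g 0).re - (g 1).imI + (g 2).imJ + (g 3).imK ∧
    4 * c 2 2 = -(g 0).re + (g 1).imI - (g 2).imJ + (g 3).imK ∧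
    4 * c 3 3 = -(g 0).re + (g 1).imI + (g 2).imJ - (g 3).imK ∧
    4 * c 1 0 = -(g 1).re + (g 0).imI - (g 3).imJ + (g 2).imK ∧
    4 * c 0 1 = -(g 1).re + (g 0).imI + (g 3).imJ - (g 2).imK ∧
    4 * c 3 2 = -(g 1).re - (g 0).imI - (g 3).imJ - (g 2).imK ∧
    4 * c 2 3 = (g 1).re + (g 0).imI - (g 3).imJ - (g 2).imK ∧
    4 * c 2 0 = -(g 2).re + (g 3).imI + (g 0).imJ - (g 1).imK ∧
    4 * c 3 1 = (g 2).re - (g 3).imI + (g 0).imJ - (g 1).imK ∧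
    4 * c 0 2 = -(g 2).re - (g 3).imI + (g 0).imJ + (g 1).imK ∧
    4 * c 1 3 = -(g 2).re - (g 3).imI - (g 0).imJ - (g 1).imK ∧
    4 * c 3 0 = -(g 3).re - (g 2).imI + (g 1).imJ + (g 0).imK ∧
    4 * c 2 1 = -(g 3).re - (g 2).imI - (g 1).imJ - (g 0).imK ∧
    4 * c 1 2 = (g 3).re - (g 2).imI - (g 1).imJ + (g 0).imK ∧
    4 * c 0 3 = -(g 3).re + (g 2).imI - (g 1).imJ + (g 0).imK := by
  intro g
  have ofComponents_eq (l : Fin 4) : ofComponents c (quaternionBasis R l) = g l :=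
    ofComponents_apply c _
  simp only [four_mul_component, ofComponents_eq]
  refine ⟨?_, ?_, ?_, ?_, ?_, ?_, ?_, ?_, ?_, ?_, ?_, ?_, ?_, ?_, ?_, ?_⟩ <;>
  simp only [Quaternion.re_mul, Quaternion.imI_mul, Quaternion.imJ_mul, Quaternion.imK_mul,
    Quaternion.re_star, Quaternion.imI_star, Quaternion.imJ_star, Quaternion.imK_star,
    re_quaternionBasis, imI_quaternionBasis, imJ_quaternionBasis, imK_quaternionBasis,
    Fin.reduceEq, one_ne_zero, zero_ne_one, reduceIte] <;>
  ring

end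

theorem eQ_eq_quaternionBasis : eQ = quaternionBasis ℝ := by
  funext l
  fin_cases l <;> ext <;> simp [eQ]

/-- The standard components `c k r` of the map `f x = ∑ k r, c k r • (e k * x * e r)` on the
quaternion algebra are recovered from the coordinates `f_l^m` of `f` relative to the basis
`(1, i, j, k)`, where `f_l^m` is the `m`-th real coordinate of `f (e l)`. -/
theorem stmt16 (c : Fin 4 → Fin 4 → ℝ) :
    let g : Fin 4 → Quaternion ℝ :=
      fun l => ∑ k : Fin 4, ∑ r : Fin 4, c k r • (eQ k * eQ l * eQ r)
    4 * c 0 0 = (g 0).re + (g 1).imI + (g 2).imJ + (g 3).imK ∧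
    4 * c 1 1 = -(g 0).re - (g 1).imI + (g 2).imJ + (g 3).imK ∧
    4 * c 2 2 = -(g 0).re + (g 1).imI - (g 2).imJ + (g 3).imK ∧
    4 * c 3 3 = -(g 0).re + (g 1).imI + (g 2).imJ - (g 3).imK ∧
    4 * c 1 0 = -(g 1).re + (g 0).imI - (g 3).imJ + (g 2).imK ∧
    4 * c 0 1 = -(g 1).re + (g 0).imI + (g 3).imJ - (g 2).imK ∧
    4 * c 3 2 = -(g 1).re - (g 0).imI - (g 3).imJ - (g 2).imK ∧
    4 * c 2 3 = (g 1).re + (g 0).imI - (g 3).imJ - (g 2).imK ∧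
    4 * c 2 0 = -(g 2).re + (g 3).imI + (g 0).imJ - (g 1).imK ∧
    4 * c 3 1 = (g 2).re - (g 3).imI + (g 0).imJ - (g 1).imK ∧
    4 * c 0 2 = -(g 2).re - (g 3).imI + (g 0).imJ + (g 1).imK ∧
    4 * c 1 3 = -(g 2).re - (g 3).imI - (g 0).imJ - (g 1).imK ∧
    4 * c 3 0 = -(g 3).re - (g 2).imI + (g 1).imJ + (g 0).imK ∧
    4 * c 2 1 = -(g 3).re - (g 2).imI - (g 1).imJ - (g 0).imK ∧
    4 * c 1 2 = (g 3).re - (g 2).imI - (g 1).imJ + (g 0).imK ∧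
    4 * c 0 3 = -(g 3).re + (g 2).imI - (g 1).imJ + (g 0).imK := by
  simpa only [eQ_eq_quaternionBasis] using stmt16_general c
end

section
/- For every ℝ-linear map f : ℍ → ℍ there exists a unique family of real numbers c : Fin 4 → Fin 4 → ℝ such that f x = Σ_{k,r ∈ Fin 4} c k r • (e k * x * e r) for all x ∈ ℍ, where (e₀, e₁, e₂, e₃) = (1, i, j, k). In other words, every ℝ-linear endomorphism of the quaternion algebra is an ℝ-linear combination of the sixteen maps x ↦ e k * x * e r, and these sixteen maps are linearly independent over ℝ. -/
open Module TensorProduct MulOpposite Quaternion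

theorem mulLeftRight_bijective_of_surjective {R A : Type*} [CommRing R] [Ring A] [Algebra R A]
    [Module.Free R A] [Module.Finite R A] (h : Function.Surjective (AlgHom.mulLeftRight R A)) :
    Function.Bijective (AlgHom.mulLeftRight R A) := by
  cases subsingleton_or_nontrivial R
  · have := Module.subsingleton R (A ⊗[R] Aᵐᵒᵖ)
    exact ⟨Function.injective_of_subsingleton _, h⟩
  · refine OrzechProperty.bijective_of_surjective_of_finrank_le
      (AlgHom.mulLeftRight R A).toLinearMap h ?_
    rw [finrank_tensorProduct, finrank_linearMap, (opLinearEquiv R).finrank_eq]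

section Algebra

variable {R A ι : Type*} [CommSemiring R] [Semiring A] [Algebra R A]

theorem mulLeftRight_surjective_of_dual [Fintype ι] (b : Basis ι R A) (d : ι → A) (τ : A → R)
    (dual : ∀ i x, τ (d i * x) = b.repr x i)
    (casimir : ∀ x, ∑ k, b k * x * d k = algebraMap R A (τ x)) :
    Function.Surjective (AlgHom.mulLeftRight R A) := by
  intro f
  refine ⟨∑ i, ∑ k, (b k * d i) ⊗ₜ op (d k * f (b i)), LinearMap.ext fun x ↦ ?_⟩
  calc AlgHom.mulLeftRight R A (∑ i, ∑ k, (b k * d i) ⊗ₜ op (d k * f (b i))) x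
    _ = ∑ i, (∑ k, b k * (d i * x) * d k) * f (b i) := by
      simp only [map_sum, LinearMap.sum_apply, AlgHom.mulLeftRight_apply, unop_op,
        Finset.sum_mul, mul_assoc]
    _ = ∑ i, b.repr x i • f (b i) := by
      simp only [casimir, dual, Algebra.smul_def]
    _ = f x := by
      simp only [← map_smul, ← map_sum, b.sum_repr]

/-- The basis of `End A` formed by the two-sided multiplications `x ↦ b k * x * b r`, for a basis
`b` of an Azumaya algebra `A`. It is indexed by the pairs `(k, r)`. -/
noncomputable def mulLeftRightBasis [IsAzumaya R A] (b : Basis ι R A) :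
    Basis (ι × ι) R (End R A) :=
  (b.tensorProduct b.mulOpposite).map
    (LinearEquiv.ofBijective (AlgHom.mulLeftRight R A).toLinearMap IsAzumaya.bij)

theorem mulLeftRightBasis_apply [IsAzumaya R A] (b : Basis ι R A) (k r : ι) (x : A) :
    mulLeftRightBasis b (k, r) x = b k * x * b r := by
  rw [mulLeftRightBasis, Basis.map_apply, Basis.tensorProduct_apply, Basis.mulOpposite_apply]
  exact AlgHom.mulLeftRight_apply R A (b k) (op (b r)) x

theorem existsUnique_sum_smul_mul_mul [Fintype ι] [IsAzumaya R A] (b : Basis ι R A)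
    (f : A →ₗ[R] A) :
    ∃! c : ι → ι → R, ∀ x, f x = ∑ k, ∑ r, c k r • (b k * x * b r) := by
  have expansion (c : ι → ι → R) :
      (mulLeftRightBasis b).equivFun.symm (Function.uncurry c) = f ↔
        ∀ x, f x = ∑ k, ∑ r, c k r • (b k * x * b r) := by
    simp [LinearMap.ext_iff, Basis.equivFun_symm_apply, LinearMap.sum_apply,
      Fintype.sum_prod_type, mulLeftRightBasis_apply, eq_comm]
  simp only [← expansion]
  exact ((mulLeftRightBasis b).equivFun.symm.bijective.comp
    (Equiv.curry ι ι R).symm.bijective).existsUnique f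

end Algebra

section QuaternionAlgebra

open QuaternionAlgebra

variable {R : Type*} [CommRing R] {c₁ c₂ c₃ : R}

/-- The reduced trace of a quaternion algebra: `x + star x` is the scalar `reducedTrace x`. -/
def reducedTrace : ℍ[R,c₁,c₂,c₃] →ₗ[R] R :=
  (2 : R) • reₗ c₁ c₂ c₃ + c₂ • imIₗ c₁ c₂ c₃

/-- The dual family of `1, i, j, k` for the reduced trace form, multiplied by
`(c₂ ^ 2 + 4 * c₁) * c₃` to clear denominators. -/
def scaledDual : Fin 4 → ℍ[R,c₁,c₂,c₃] :=
  ![⟨(c₂ ^ 2 + 2 * c₁) * c₃, -c₂ * c₃, 0, 0⟩, ⟨-c₂ * c₃, 2 * c₃, 0, 0⟩,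
    ⟨0, 0, 2 * c₁, c₂⟩, ⟨0, 0, c₂, -2⟩]

theorem coe_basisOneIJK :
    ⇑(basisOneIJK c₁ c₂ c₃) = ![1, ⟨0, 1, 0, 0⟩, ⟨0, 0, 1, 0⟩, ⟨0, 0, 0, 1⟩] := by
  funext k
  apply (basisOneIJK c₁ c₂ c₃).repr.injective
  ext m
  fin_cases k <;> fin_cases m <;> simp

theorem reducedTrace_scaledDual_mul (i : Fin 4) (x : ℍ[R,c₁,c₂,c₃]) :
    reducedTrace (scaledDual i * x) =
      (c₂ ^ 2 + 4 * c₁) * c₃ * (basisOneIJK c₁ c₂ c₃).repr x i := by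
  fin_cases i <;> simp [reducedTrace, scaledDual] <;> ring

theorem sum_basisOneIJK_mul_mul_scaledDual (x : ℍ[R,c₁,c₂,c₃]) :
    ∑ k, basisOneIJK c₁ c₂ c₃ k * x * scaledDual k =
      ((c₂ ^ 2 + 4 * c₁) * c₃) • algebraMap R ℍ[R,c₁,c₂,c₃] (reducedTrace x) := by
  ext <;> simp [coe_basisOneIJK, Fin.sum_univ_four, scaledDual, reducedTrace, algebraMap_eq] <;>
    ring

theorem isAzumaya_quaternionAlgebra (h₁₂ : IsUnit (c₂ ^ 2 + 4 * c₁)) (h₃ : IsUnit c₃) :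
    IsAzumaya R ℍ[R,c₁,c₂,c₃] where
  eq_of_smul_eq_smul {r s} h := by
    apply algebraMap_injective (c₁ := c₁) (c₂ := c₂) (c₃ := c₃)
    simpa only [Algebra.algebraMap_eq_smul_one] using h 1
  bij := by
    obtain ⟨δ, hδ⟩ := h₁₂.mul h₃
    refine mulLeftRight_bijective_of_surjective <|
      mulLeftRight_surjective_of_dual (basisOneIJK c₁ c₂ c₃) (fun i ↦ δ⁻¹ • scaledDual i)
        reducedTrace (fun i x ↦ ?_) (fun x ↦ ?_)
    · simp only [smul_mul_assoc, Units.smul_def, map_smul, reducedTrace_scaledDual_mul, ← hδ,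
        smul_eq_mul, Units.inv_mul_cancel_left]
    · simp only [mul_smul_comm, ← Finset.smul_sum, sum_basisOneIJK_mul_mul_scaledDual, ← hδ,
        ← Units.smul_def, inv_smul_smul]

theorem stmt17_general (h₁₂ : IsUnit (c₂ ^ 2 + 4 * c₁)) (h₃ : IsUnit c₃)
    (f : ℍ[R,c₁,c₂,c₃] →ₗ[R] ℍ[R,c₁,c₂,c₃]) :
    ∃! c : Fin 4 → Fin 4 → R, ∀ x, f x =
      ∑ k, ∑ r, c k r • (basisOneIJK c₁ c₂ c₃ k * x * basisOneIJK c₁ c₂ c₃ r) :=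
  have := isAzumaya_quaternionAlgebra h₁₂ h₃
  existsUnique_sum_smul_mul_mul (basisOneIJK c₁ c₂ c₃) f

end QuaternionAlgebra

/-- Every `ℝ`-linear endomorphism of the quaternion algebra is, in a unique way, an
`ℝ`-linear combination of the sixteen maps `x ↦ e k * x * e r`, where `(e 0, e 1, e 2, e 3)`
is the standard basis `(1, i, j, k)`. -/
theorem stmt17 (f : Quaternion ℝ →ₗ[ℝ] Quaternion ℝ) :
    ∃! c : Fin 4 → Fin 4 → ℝ,
      ∀ x : Quaternion ℝ, f x = ∑ k : Fin 4, ∑ r : Fin 4, c k r • (eQ k * x * eQ r) := by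
  have eQ_eq : eQ = QuaternionAlgebra.basisOneIJK (-1 : ℝ) 0 (-1) := coe_basisOneIJK.symm
  rw [eQ_eq]
  exact stmt17_general (by norm_num) (by norm_num) f
end
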